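/- arXiv:1209.4582 — 5 statements merged into one kernel-verified Lean document; each statement's English description precedes it below -/
import Mathlib

section
/- Let 1 < p ≤ 2. There exists a constant C = C(p) > 0 such that for all complex numbers a, b, c one has | |a+c|^p − |a|^p − |b+c|^p + |b|^p | ≤ C · |a−b| · |c|^{p−1}. -/
/-!
For fixed `c`, the derivative of `x ↦ ‖x + c‖ ^ p - ‖x‖ ^ p` is the increment over `c` of the
derivative of `‖·‖ ^ p`. The latter is pairing with `p • ‖x‖ ^ (p - 2) • x`, and the map
`x ↦ ‖x‖ ^ (p - 2) • x` is Hölder continuous of exponent `p - 1`: if `‖y‖ ≤ ‖x‖`, its increment is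
at most `2 * ‖x‖ ^ (p - 2) * ‖x - y‖`, and `‖x - y‖ ≤ 2 * ‖x‖` controls the negative power. So the
derivative is bounded by a multiple of `‖c‖ ^ (p - 1)`, and the mean value inequality applied
between `b` and `a` concludes.
-/

open Set

lemma rpow_sub_one_mul_self {s t : ℝ} (ht : 0 < t) : t ^ (s - 1) * t = t ^ s := by
  rw [← Real.rpow_add_one ht.ne', sub_add_cancel]

section NormedSpace

variable {E : Type*} [NormedAddCommGroup E] [NormedSpace ℝ E]

lemma norm_rpow_sub_rpow_smul_le {s : ℝ} (hs0 : 0 ≤ s) (hs1 : s ≤ 1) {x y : E}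
    (hyx : ‖y‖ ≤ ‖x‖) :
    ‖(‖x‖ ^ (s - 1) - ‖y‖ ^ (s - 1)) • y‖ ≤ ‖x‖ ^ (s - 1) * ‖x - y‖ := by
  rcases eq_or_ne y 0 with rfl | hy
  · rw [smul_zero, norm_zero]
    positivity
  have hy : 0 < ‖y‖ := norm_pos_iff.2 hy
  have antitone : ‖x‖ ^ (s - 1) ≤ ‖y‖ ^ (s - 1) :=
    Real.rpow_le_rpow_of_nonpos hy hyx (by linarith)
  have monotone : ‖y‖ ^ (s - 1) * ‖y‖ ≤ ‖x‖ ^ (s - 1) * ‖x‖ := by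
    rw [rpow_sub_one_mul_self hy, rpow_sub_one_mul_self (hy.trans_le hyx)]
    exact Real.rpow_le_rpow hy.le hyx hs0
  calc ‖(‖x‖ ^ (s - 1) - ‖y‖ ^ (s - 1)) • y‖
      = (‖y‖ ^ (s - 1) - ‖x‖ ^ (s - 1)) * ‖y‖ := by
        rw [norm_smul, norm_sub_rev, Real.norm_of_nonneg (sub_nonneg.2 antitone)]
    _ ≤ ‖x‖ ^ (s - 1) * (‖x‖ - ‖y‖) := by linarith
    _ ≤ ‖x‖ ^ (s - 1) * ‖x - y‖ := by
        gcongr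
        exact norm_sub_norm_le x y

lemma norm_rpow_smul_sub_rpow_smul_le_of_norm_le {s : ℝ} (hs0 : 0 ≤ s) (hs1 : s ≤ 1) {x y : E}
    (hyx : ‖y‖ ≤ ‖x‖) :
    ‖‖x‖ ^ (s - 1) • x - ‖y‖ ^ (s - 1) • y‖ ≤ 4 * ‖x - y‖ ^ s := by
  rcases eq_or_ne x y with rfl | hxy
  · rw [sub_self, norm_zero]
    positivity
  have hd : 0 < ‖x - y‖ := norm_pos_iff.2 (sub_ne_zero.2 hxy)
  have half_le : ‖x - y‖ / 2 ≤ ‖x‖ := by linarith [norm_sub_le x y]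
  calc ‖‖x‖ ^ (s - 1) • x - ‖y‖ ^ (s - 1) • y‖
      = ‖‖x‖ ^ (s - 1) • (x - y) + (‖x‖ ^ (s - 1) - ‖y‖ ^ (s - 1)) • y‖ := by
        congr 1
        module
    _ ≤ ‖x‖ ^ (s - 1) * ‖x - y‖ + ‖x‖ ^ (s - 1) * ‖x - y‖ := by
        refine norm_add_le_of_le ?_ (norm_rpow_sub_rpow_smul_le hs0 hs1 hyx)
        rw [norm_smul, Real.norm_of_nonneg (by positivity)]
    _ = 4 * (‖x‖ ^ (s - 1) * (‖x - y‖ / 2)) := by ring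
    _ ≤ 4 * ((‖x - y‖ / 2) ^ (s - 1) * (‖x - y‖ / 2)) := by
        gcongr 4 * (?_ * _)
        exact Real.rpow_le_rpow_of_nonpos (half_pos hd) half_le (by linarith)
    _ = 4 * (‖x - y‖ / 2) ^ s := by rw [rpow_sub_one_mul_self (half_pos hd)]
    _ ≤ 4 * ‖x - y‖ ^ s := by
        gcongr
        exact half_le_self hd.le

lemma norm_rpow_smul_sub_rpow_smul_le {s : ℝ} (hs0 : 0 ≤ s) (hs1 : s ≤ 1) (x y : E) :
    ‖‖x‖ ^ (s - 1) • x - ‖y‖ ^ (s - 1) • y‖ ≤ 4 * ‖x - y‖ ^ s := by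
  rcases le_total ‖y‖ ‖x‖ with h | h
  · exact norm_rpow_smul_sub_rpow_smul_le_of_norm_le hs0 hs1 h
  · rw [norm_sub_rev, norm_sub_rev x y]
    exact norm_rpow_smul_sub_rpow_smul_le_of_norm_le hs0 hs1 h

lemma norm_second_difference_le_of_norm_fderiv_sub_le
    {F : Type*} [NormedAddCommGroup F] [NormedSpace ℝ F]
    {f : E → F} (hf : Differentiable ℝ f)
    {c : E} {K : ℝ} (hK : ∀ x, ‖fderiv ℝ f (x + c) - fderiv ℝ f x‖ ≤ K) (a b : E) :
    ‖f (a + c) - f a - (f (b + c) - f b)‖ ≤ K * ‖a - b‖ := by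
  have hasFDerivAt_increment (x : E) :
      HasFDerivAt (fun x ↦ f (x + c) - f x) (fderiv ℝ f (x + c) - fderiv ℝ f x) x :=
    ((hasFDerivAt_comp_add_right c).2 (hf (x + c)).hasFDerivAt).sub (hf x).hasFDerivAt
  exact convex_univ.norm_image_sub_le_of_norm_hasFDerivWithin_le
    (fun x _ ↦ (hasFDerivAt_increment x).hasFDerivWithinAt) (fun x _ ↦ hK x)
    (mem_univ b) (mem_univ a)

end NormedSpace

section InnerProductSpace

variable {E : Type*} [NormedAddCommGroup E] [InnerProductSpace ℝ E]

lemma norm_fderiv_norm_rpow_sub_le {p : ℝ} (hp1 : 1 < p) (hp2 : p ≤ 2) (x y : E) :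
    ‖fderiv ℝ (fun z : E ↦ ‖z‖ ^ p) x - fderiv ℝ (fun z : E ↦ ‖z‖ ^ p) y‖
      ≤ 4 * p * ‖x - y‖ ^ (p - 1) := by
  have fderiv_eq (z : E) :
      fderiv ℝ (fun z : E ↦ ‖z‖ ^ p) z = innerSL ℝ (p • ‖z‖ ^ (p - 1 - 1) • z) := by
    rw [fderiv_norm_rpow z hp1, map_smul, map_smul, smul_smul, sub_sub,
      one_add_one_eq_two]
  calc ‖fderiv ℝ (fun z : E ↦ ‖z‖ ^ p) x - fderiv ℝ (fun z : E ↦ ‖z‖ ^ p) y‖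
      = p * ‖‖x‖ ^ (p - 1 - 1) • x - ‖y‖ ^ (p - 1 - 1) • y‖ := by
        rw [fderiv_eq, fderiv_eq, ← map_sub, innerSL_apply_norm, ← smul_sub, norm_smul,
          Real.norm_of_nonneg (by linarith)]
    _ ≤ p * (4 * ‖x - y‖ ^ (p - 1)) := by
        gcongr
        exact norm_rpow_smul_sub_rpow_smul_le (by linarith) (by linarith) x y
    _ = 4 * p * ‖x - y‖ ^ (p - 1) := by ring

theorem second_difference_estimate_general {p : ℝ} (hp1 : 1 < p) (hp2 : p ≤ 2) (a b c : E) :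
    |‖a + c‖ ^ p - ‖a‖ ^ p - ‖b + c‖ ^ p + ‖b‖ ^ p| ≤ 4 * p * ‖a - b‖ * ‖c‖ ^ (p - 1) := by
  have increment_le (x : E) :
      ‖fderiv ℝ (fun z : E ↦ ‖z‖ ^ p) (x + c) - fderiv ℝ (fun z : E ↦ ‖z‖ ^ p) x‖
        ≤ 4 * p * ‖c‖ ^ (p - 1) := by
    simpa only [add_sub_cancel_left] using norm_fderiv_norm_rpow_sub_le hp1 hp2 (x + c) x
  calc |‖a + c‖ ^ p - ‖a‖ ^ p - ‖b + c‖ ^ p + ‖b‖ ^ p|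
      = ‖‖a + c‖ ^ p - ‖a‖ ^ p - (‖b + c‖ ^ p - ‖b‖ ^ p)‖ := by
        rw [Real.norm_eq_abs, ← sub_add]
    _ ≤ 4 * p * ‖c‖ ^ (p - 1) * ‖a - b‖ :=
        norm_second_difference_le_of_norm_fderiv_sub_le (differentiable_norm_rpow hp1)
          increment_le a b
    _ = 4 * p * ‖a - b‖ * ‖c‖ ^ (p - 1) := by ring

end InnerProductSpace

/-- Lemma A.1: For `1 < p ≤ 2` there is `C = C(p) > 0` such that for all complex `a b c`,
`| |a+c|^p − |a|^p − |b+c|^p + |b|^p | ≤ C |a−b| |c|^{p−1}`. -/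
theorem second_difference_estimate (p : ℝ) (hp1 : 1 < p) (hp2 : p ≤ 2) :
    ∃ C : ℝ, 0 < C ∧ ∀ a b c : ℂ,
      |‖a + c‖ ^ p - ‖a‖ ^ p - ‖b + c‖ ^ p + ‖b‖ ^ p| ≤ C * ‖a - b‖ * ‖c‖ ^ (p - 1) :=
  ⟨4 * p, by linarith, second_difference_estimate_general hp1 hp2⟩
end

section
/- Let p > 2. There exists a constant C = C(p) > 0 such that for all complex numbers a, b, c one has | |a+c|^p − |a|^p − |b+c|^p + |b|^p | ≤ C · |a−b| · |c| · ( |a|^{p−2} + |b|^{p−2} + |c|^{p−2} ). -/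
/-!
The gradient of `‖·‖ ^ p` is `p • ‖x‖ ^ (p - 2) • x`, which by Bernoulli's inequality is Lipschitz
on the ball of radius `R` with constant `p * (p - 1) * R ^ (p - 2)`. The second difference is the
increment along `c` of `v ↦ ‖a + v‖ ^ p - ‖b + v‖ ^ p`, so the mean value inequality bounds it by
this constant times `‖a - b‖ * ‖c‖`, with `R = max ‖a‖ ‖b‖ + ‖c‖`.
-/

section RealInequalities

variable {q r s : ℝ}

lemma rpow_sub_rpow_mul_le (hq : 0 ≤ q) (hr : 0 ≤ r) (hrs : r ≤ s) :
    (s ^ q - r ^ q) * r ≤ q * s ^ q * (s - r) := by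
  rcases hr.eq_or_lt with rfl | hr₀
  · simp only [mul_zero, sub_zero]
    positivity
  have hs : 0 < s := hr₀.trans_le hrs
  have bernoulli : 1 + (q + 1) * (r / s - 1) ≤ (r / s) ^ (q + 1) := by
    simpa only [add_sub_cancel] using
      one_add_mul_self_le_rpow_one_add (s := r / s - 1) (by linarith [div_nonneg hr hs.le])
        (by linarith : 1 ≤ q + 1)
  rw [Real.div_rpow hr hs.le, le_div_iff₀ (by positivity), Real.rpow_add_one hs.ne',
    Real.rpow_add_one hr₀.ne'] at bernoulli
  have clear_denominator : (1 + (q + 1) * (r / s - 1)) * (s ^ q * s)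
      = s ^ q * r - q * s ^ q * (s - r) := by
    field_simp
    ring
  linarith

lemma add_rpow_le_two_rpow_mul_max (hr : 0 ≤ r) (hs : 0 ≤ s) (hq : 0 ≤ q) :
    (r + s) ^ q ≤ 2 ^ q * max (r ^ q) (s ^ q) := by
  rw [← Real.rpow_max hr hs hq, ← Real.mul_rpow zero_le_two (hr.trans (le_max_left r s))]
  gcongr
  linarith [le_max_left r s, le_max_right r s]

end RealInequalities

section NormedSpace

variable {E F : Type*} [NormedAddCommGroup E] [NormedSpace ℝ E]
  [NormedAddCommGroup F] [NormedSpace ℝ F]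

lemma norm_norm_rpow_smul_sub_le {q R : ℝ} (hq : 0 ≤ q) {x y : E} (hx : ‖x‖ ≤ R) (hy : ‖y‖ ≤ R) :
    ‖‖x‖ ^ q • x - ‖y‖ ^ q • y‖ ≤ (q + 1) * R ^ q * ‖x - y‖ := by
  wlog hyx : ‖y‖ ≤ ‖x‖ generalizing x y
  · simpa only [norm_sub_rev] using this hy hx (le_of_not_ge hyx)
  have hpow : ‖y‖ ^ q ≤ ‖x‖ ^ q := by gcongr
  calc ‖‖x‖ ^ q • x - ‖y‖ ^ q • y‖
      = ‖‖x‖ ^ q • (x - y) + (‖x‖ ^ q - ‖y‖ ^ q) • y‖ := by congr 1; module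
    _ ≤ ‖x‖ ^ q * ‖x - y‖ + (‖x‖ ^ q - ‖y‖ ^ q) * ‖y‖ := by
        refine (norm_add_le _ _).trans_eq ?_
        rw [norm_smul, norm_smul, Real.norm_of_nonneg (by positivity),
          Real.norm_of_nonneg (sub_nonneg.2 hpow)]
    _ ≤ ‖x‖ ^ q * ‖x - y‖ + q * ‖x‖ ^ q * (‖x‖ - ‖y‖) :=
        add_le_add_right (rpow_sub_rpow_mul_le hq (norm_nonneg y) hyx) _
    _ ≤ ‖x‖ ^ q * ‖x - y‖ + q * ‖x‖ ^ q * ‖x - y‖ := by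
        gcongr
        exact norm_sub_norm_le x y
    _ = (q + 1) * ‖x‖ ^ q * ‖x - y‖ := by ring
    _ ≤ (q + 1) * R ^ q * ‖x - y‖ := by gcongr

lemma norm_second_difference_le_of_convex {f : E → F} {f' : E → E →L[ℝ] F} {s : Set E}
    {K : ℝ} (hs : Convex ℝ s) (hf : ∀ x ∈ s, HasFDerivWithinAt f (f' x) s x)
    (hf' : ∀ x ∈ s, ∀ y ∈ s, ‖f' x - f' y‖ ≤ K * ‖x - y‖) {a b c : E}
    (ha : a ∈ s) (hb : b ∈ s) (hac : a + c ∈ s) (hbc : b + c ∈ s) :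
    ‖f (a + c) - f a - f (b + c) + f b‖ ≤ K * ‖a - b‖ * ‖c‖ := by
  set t : Set E := (a + ·) ⁻¹' s ∩ (b + ·) ⁻¹' s
  have ht : Convex ℝ t := (hs.translate_preimage_right a).inter (hs.translate_preimage_right b)
  have hderiv : ∀ v ∈ t, HasFDerivWithinAt (fun v ↦ f (a + v) - f (b + v))
      (f' (a + v) - f' (b + v)) t v := fun v hv ↦
    ((hf _ hv.1).comp v ((hasFDerivWithinAt_id v t).const_add a) fun _ hw ↦ hw.1).sub
      ((hf _ hv.2).comp v ((hasFDerivWithinAt_id v t).const_add b) fun _ hw ↦ hw.2)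
  have hbound : ∀ v ∈ t, ‖f' (a + v) - f' (b + v)‖ ≤ K * ‖a - b‖ := fun v hv ↦ by
    simpa only [add_sub_add_right_eq_sub] using hf' _ hv.1 _ hv.2
  have h₀ : (0 : E) ∈ t := by simpa [t] using And.intro ha hb
  have hincrement := ht.norm_image_sub_le_of_norm_hasFDerivWithin_le hderiv hbound h₀ ⟨hac, hbc⟩
  simp only [add_zero, sub_zero] at hincrement
  convert hincrement using 2
  abel

end NormedSpace

section InnerProductSpace

variable {E : Type*} [NormedAddCommGroup E] [InnerProductSpace ℝ E] {p : ℝ}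

lemma abs_second_difference_norm_rpow_le (hp : 2 ≤ p) {R : ℝ} {a b c : E}
    (ha : ‖a‖ ≤ R) (hb : ‖b‖ ≤ R) (hac : ‖a + c‖ ≤ R) (hbc : ‖b + c‖ ≤ R) :
    |‖a + c‖ ^ p - ‖a‖ ^ p - ‖b + c‖ ^ p + ‖b‖ ^ p|
      ≤ p * (p - 1) * R ^ (p - 2) * ‖a - b‖ * ‖c‖ := by
  have hderiv (x : E) : HasFDerivAt (fun x : E ↦ ‖x‖ ^ p)
      (p • innerSL ℝ (‖x‖ ^ (p - 2) • x)) x := by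
    simpa only [map_smul, smul_smul] using hasFDerivAt_norm_rpow x (by linarith : 1 < p)
  have hlipschitz : ∀ x ∈ Metric.closedBall (0 : E) R, ∀ y ∈ Metric.closedBall (0 : E) R,
      ‖p • innerSL ℝ (‖x‖ ^ (p - 2) • x) - p • innerSL ℝ (‖y‖ ^ (p - 2) • y)‖
        ≤ p * (p - 1) * R ^ (p - 2) * ‖x - y‖ := by
    intro x hx y hy
    rw [mem_closedBall_zero_iff] at hx hy
    rw [← smul_sub, ← map_sub, norm_smul, innerSL_apply_norm, Real.norm_of_nonneg (by linarith)]
    calc p * ‖‖x‖ ^ (p - 2) • x - ‖y‖ ^ (p - 2) • y‖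
        ≤ p * ((p - 2 + 1) * R ^ (p - 2) * ‖x - y‖) := by
          gcongr
          exact norm_norm_rpow_smul_sub_le (by linarith) hx hy
      _ = p * (p - 1) * R ^ (p - 2) * ‖x - y‖ := by ring
  exact norm_second_difference_le_of_convex (convex_closedBall 0 R)
    (fun x _ ↦ (hderiv x).hasFDerivWithinAt) hlipschitz (by simpa using ha) (by simpa using hb)
    (by simpa using hac) (by simpa using hbc)

theorem second_difference_estimate_p_gt_two_general (hp : 2 ≤ p) (a b c : E) :
    |‖a + c‖ ^ p - ‖a‖ ^ p - ‖b + c‖ ^ p + ‖b‖ ^ p|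
      ≤ p * (p - 1) * 2 ^ (p - 2) * ‖a - b‖ * ‖c‖
        * (‖a‖ ^ (p - 2) + ‖b‖ ^ (p - 2) + ‖c‖ ^ (p - 2)) := by
  have hq : 0 ≤ p - 2 := by linarith
  have hp₁ : 0 ≤ p - 1 := by linarith
  set R := max ‖a‖ ‖b‖ + ‖c‖
  have ha : ‖a‖ + ‖c‖ ≤ R := add_le_add (le_max_left _ _) le_rfl
  have hb : ‖b‖ + ‖c‖ ≤ R := add_le_add (le_max_right _ _) le_rfl
  have hR : R ^ (p - 2) ≤ 2 ^ (p - 2) * (‖a‖ ^ (p - 2) + ‖b‖ ^ (p - 2) + ‖c‖ ^ (p - 2)) := by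
    refine (add_rpow_le_two_rpow_mul_max (by positivity) (norm_nonneg c) hq).trans ?_
    rw [Real.rpow_max (norm_nonneg a) (norm_nonneg b) hq]
    gcongr
    refine (max_le_add_of_nonneg (by positivity) (by positivity)).trans ?_
    gcongr
    exact max_le_add_of_nonneg (by positivity) (by positivity)
  calc |‖a + c‖ ^ p - ‖a‖ ^ p - ‖b + c‖ ^ p + ‖b‖ ^ p|
      ≤ p * (p - 1) * R ^ (p - 2) * ‖a - b‖ * ‖c‖ :=
        abs_second_difference_norm_rpow_le hp (by linarith [norm_nonneg c])
          (by linarith [norm_nonneg c]) ((norm_add_le a c).trans ha) ((norm_add_le b c).trans hb)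
    _ ≤ p * (p - 1) * (2 ^ (p - 2) * (‖a‖ ^ (p - 2) + ‖b‖ ^ (p - 2) + ‖c‖ ^ (p - 2)))
          * ‖a - b‖ * ‖c‖ := by gcongr
    _ = _ := by ring

end InnerProductSpace

/-- For `p > 2` there is `C = C(p) > 0` such that for all complex `a b c`,
`| |a+c|^p − |a|^p − |b+c|^p + |b|^p | ≤ C |a−b| |c| (|a|^{p−2} + |b|^{p−2} + |c|^{p−2})`. -/
theorem second_difference_estimate_p_gt_two (p : ℝ) (hp : 2 < p) :
    ∃ C : ℝ, 0 < C ∧ ∀ a b c : ℂ,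
      |‖a + c‖ ^ p - ‖a‖ ^ p - ‖b + c‖ ^ p + ‖b‖ ^ p|
        ≤ C * ‖a - b‖ * ‖c‖ * (‖a‖ ^ (p - 2) + ‖b‖ ^ (p - 2) + ‖c‖ ^ (p - 2)) := by
  have hp₁ : 0 < p - 1 := by linarith
  exact ⟨p * (p - 1) * 2 ^ (p - 2), by positivity,
    second_difference_estimate_p_gt_two_general hp.le⟩
end

section
/- Let q ≥ 1 be a real number and let J be a positive integer. There exists a constant C = C(J, q) > 0 such that for all complex numbers v_1, …, v_J one has | |v_1 + ⋯ + v_J|^q − Σ_{j=1}^J |v_j|^q | ≤ C · Σ_{j≠k} |v_j|^{q−1} |v_k|, where the last sum runs over all ordered pairs (j,k) with 1 ≤ j, k ≤ J and j ≠ k. -/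
open Finset

/-!
Let `m` be an index at which `‖v j‖` is largest. By the mean value theorem, replacing `v m` by the
whole sum changes `‖·‖ ^ q` by at most a constant times `‖v m‖ ^ (q - 1) * ∑ k ≠ m, ‖v k‖`, because
the norm of the sum is at most the number of terms times `‖v m‖`. The remaining powers
`‖v k‖ ^ q = ‖v k‖ ^ (q - 1) * ‖v k‖` are bounded by the same quantity, which is the `j = m` row of
the double sum.
-/

section PowerDifference

variable {q : ℝ}

theorem abs_rpow_sub_rpow_le {a b : ℝ} (hq : 1 ≤ q) (ha : 0 ≤ a) (hb : 0 ≤ b) :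
    |a ^ q - b ^ q| ≤ q * max a b ^ (q - 1) * |a - b| := by
  have deriv_bound : ∀ x ∈ Set.Icc 0 (max a b), ‖q * x ^ (q - 1)‖ ≤ q * max a b ^ (q - 1) := by
    rintro x ⟨hx, hx_le⟩
    rw [Real.norm_of_nonneg (by positivity)]
    gcongr
  exact (convex_Icc 0 (max a b)).norm_image_sub_le_of_norm_hasDerivWithin_le
    (fun x _ ↦ (Real.hasDerivAt_rpow_const (Or.inr hq)).hasDerivWithinAt) deriv_bound
    ⟨hb, le_max_right a b⟩ ⟨ha, le_max_left a b⟩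

theorem abs_norm_rpow_sub_norm_rpow_le {E : Type*} [SeminormedAddCommGroup E] (hq : 1 ≤ q)
    (x y : E) :
    |‖x‖ ^ q - ‖y‖ ^ q| ≤ q * max ‖x‖ ‖y‖ ^ (q - 1) * ‖x - y‖ :=
  (abs_rpow_sub_rpow_le hq (norm_nonneg x) (norm_nonneg y)).trans <| by
    gcongr
    exact abs_norm_sub_norm_le x y

end PowerDifference

section FiniteSums

variable {ι E : Type*} [SeminormedAddCommGroup E] {q : ℝ} {s : Finset ι}

theorem sum_rpow_le_rpow_sub_one_mul_sum {f : ι → ℝ} {M : ℝ} (hq : 1 ≤ q)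
    (hf : ∀ i ∈ s, 0 ≤ f i) (hfM : ∀ i ∈ s, f i ≤ M) :
    ∑ i ∈ s, f i ^ q ≤ M ^ (q - 1) * ∑ i ∈ s, f i := by
  rw [mul_sum]
  refine sum_le_sum fun i hi ↦ ?_
  have hfi := hf i hi
  calc f i ^ q = f i ^ (q - 1) * f i := by
        rw [← Real.rpow_add_one' hfi (by linarith), sub_add_cancel]
    _ ≤ M ^ (q - 1) * f i := by
        gcongr
        exact hfM i hi

variable [DecidableEq ι] {v : ι → E} {m : ι}

theorem abs_norm_sum_rpow_sub_norm_rpow_le (hq : 1 ≤ q) (hm : m ∈ s)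
    (hmax : ∀ k ∈ s, ‖v k‖ ≤ ‖v m‖) :
    |‖∑ j ∈ s, v j‖ ^ q - ‖v m‖ ^ q|
      ≤ q * (#s : ℝ) ^ (q - 1) * (‖v m‖ ^ (q - 1) * ∑ k ∈ s.erase m, ‖v k‖) := by
  have norm_sum_le_card_mul : ‖∑ j ∈ s, v j‖ ≤ #s * ‖v m‖ := by
    simpa only [nsmul_eq_mul] using (norm_sum_le s v).trans (sum_le_card_nsmul s _ _ hmax)
  have one_le_card : (1 : ℝ) ≤ #s := by exact_mod_cast card_pos.2 ⟨m, hm⟩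
  have norm_sum_sub_le : ‖∑ j ∈ s, v j - v m‖ ≤ ∑ k ∈ s.erase m, ‖v k‖ := by
    rw [← sum_erase_eq_sub hm]
    exact norm_sum_le _ _
  calc |‖∑ j ∈ s, v j‖ ^ q - ‖v m‖ ^ q|
      ≤ q * max ‖∑ j ∈ s, v j‖ ‖v m‖ ^ (q - 1) * ‖∑ j ∈ s, v j - v m‖ :=
        abs_norm_rpow_sub_norm_rpow_le hq _ _
    _ ≤ q * (#s * ‖v m‖) ^ (q - 1) * ∑ k ∈ s.erase m, ‖v k‖ := by
        gcongr
        exact max_le norm_sum_le_card_mul (le_mul_of_one_le_left (norm_nonneg _) one_le_card)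
    _ = q * (#s : ℝ) ^ (q - 1) * (‖v m‖ ^ (q - 1) * ∑ k ∈ s.erase m, ‖v k‖) := by
        rw [Real.mul_rpow (Nat.cast_nonneg _) (norm_nonneg _)]
        ring

theorem abs_norm_sum_rpow_sub_sum_norm_rpow_le (hq : 1 ≤ q) (hm : m ∈ s)
    (hmax : ∀ k ∈ s, ‖v k‖ ≤ ‖v m‖) :
    |‖∑ j ∈ s, v j‖ ^ q - ∑ j ∈ s, ‖v j‖ ^ q|
      ≤ (q * (#s : ℝ) ^ (q - 1) + 1) * (‖v m‖ ^ (q - 1) * ∑ k ∈ s.erase m, ‖v k‖) := by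
  have sum_erase_le : |∑ k ∈ s.erase m, ‖v k‖ ^ q|
      ≤ ‖v m‖ ^ (q - 1) * ∑ k ∈ s.erase m, ‖v k‖ := by
    rw [abs_of_nonneg (by positivity)]
    exact sum_rpow_le_rpow_sub_one_mul_sum hq (fun _ _ ↦ norm_nonneg _)
      fun k hk ↦ hmax k (mem_of_mem_erase hk)
  rw [← add_sum_erase s (fun j ↦ ‖v j‖ ^ q) hm, ← sub_sub, add_one_mul]
  exact (abs_sub _ _).trans
    (add_le_add (abs_norm_sum_rpow_sub_norm_rpow_le hq hm hmax) sum_erase_le)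

theorem scattering_size_decoupling_general (hq : 1 ≤ q) (s : Finset ι) (v : ι → E) :
    |‖∑ j ∈ s, v j‖ ^ q - ∑ j ∈ s, ‖v j‖ ^ q|
      ≤ (q * (#s : ℝ) ^ (q - 1) + 1)
        * ∑ j ∈ s, ∑ k ∈ s.erase j, ‖v j‖ ^ (q - 1) * ‖v k‖ := by
  rcases s.eq_empty_or_nonempty with rfl | hs
  · simp [Real.zero_rpow (by linarith : q ≠ 0)]
  obtain ⟨m, hm, hmax⟩ := s.exists_max_image (fun j ↦ ‖v j‖) hs
  refine (abs_norm_sum_rpow_sub_sum_norm_rpow_le hq hm hmax).trans ?_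
  rw [mul_sum]
  gcongr
  exact single_le_sum (f := fun j ↦ ∑ k ∈ s.erase j, ‖v j‖ ^ (q - 1) * ‖v k‖)
    (fun j _ ↦ by positivity) hm

end FiniteSums

/-- For real `q ≥ 1` and a positive integer `J`, there is `C = C(J,q) > 0` such that
for all complex `v_1, …, v_J`,
`| |Σ v_j|^q − Σ |v_j|^q | ≤ C Σ_{j≠k} |v_j|^{q−1} |v_k|`. -/
theorem scattering_size_decoupling (q : ℝ) (hq : 1 ≤ q) (J : ℕ) (hJ : 0 < J) :
    ∃ C : ℝ, 0 < C ∧ ∀ v : Fin J → ℂ,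
      |‖∑ j, v j‖ ^ q - ∑ j, ‖v j‖ ^ q|
        ≤ C * ∑ j, ∑ k, if j ≠ k then ‖v j‖ ^ (q - 1) * ‖v k‖ else 0 := by
  refine ⟨q * (#(univ : Finset (Fin J)) : ℝ) ^ (q - 1) + 1, by positivity, fun v ↦ ?_⟩
  simpa only [← sum_filter, filter_ne] using scattering_size_decoupling_general hq univ v
end

section
/- Let p > 0 and let J be a positive integer, and set F(z) = |z|^p z for complex z. There exists a constant C = C(J, p) > 0 such that for all complex numbers v_1, …, v_J one has | F(v_1 + ⋯ + v_J) − Σ_{j=1}^J F(v_j) | ≤ C · Σ_{j≠k} |v_j| · |v_k|^p, where the last sum runs over all ordered pairs (j,k) with 1 ≤ j, k ≤ J and j ≠ k. -/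
/-!
With `F x = ‖x‖ ^ p • x`, the tangent line inequality for `t ↦ t ^ (p + 1)` makes `F` Lipschitz
with constant `(p + 1) R ^ p` on the ball of radius `R`. Compare everything with a summand `v m` of
largest norm. The sum `∑ v j` and `v m` both lie in the ball of radius `#s * ‖v m‖`, so
`F (∑ v j) - F (v m)` is at most a constant times `‖v m‖ ^ p * ∑_{j ≠ m} ‖v j‖`, and each remaining
`F (v j)` is at most `‖v j‖ * ‖v m‖ ^ p` by maximality. Only the pairs `(j, m)` are needed on the
right-hand side.
-/

open Finset

theorem rpow_sub_rpow_mul_le_s6 {p a b : ℝ} (hp : 0 ≤ p) (ha : 0 ≤ a) (hb : 0 ≤ b) :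
    (a ^ p - b ^ p) * b ≤ p * a ^ p * (a - b) := by
  have hq : p + 1 ≠ 0 := by positivity
  have young : a ^ p * b ≤ p / (p + 1) * (a ^ p * a) + 1 / (p + 1) * (b ^ p * b) := by
    have amgm := Real.geom_mean_le_arith_mean2_weighted (w₁ := p / (p + 1)) (w₂ := 1 / (p + 1))
      (by positivity) (by positivity) (Real.rpow_nonneg ha (p + 1)) (Real.rpow_nonneg hb (p + 1))
      (by field_simp)
    rwa [← Real.rpow_mul ha, ← Real.rpow_mul hb, mul_div_cancel₀ _ hq, mul_div_cancel₀ _ hq,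
      Real.rpow_one, Real.rpow_add_one' ha hq, Real.rpow_add_one' hb hq] at amgm
  field_simp at young
  linarith

theorem sum_erase_le_sum_offDiag {ι M : Type*} [DecidableEq ι] [AddCommMonoid M] [PartialOrder M]
    [IsOrderedAddMonoid M] {s : Finset ι} {f : ι → ι → M} {m : ι} (hm : m ∈ s)
    (hf : ∀ j k, 0 ≤ f j k) :
    ∑ j ∈ s.erase m, f j m ≤ ∑ x ∈ s.offDiag, f x.1 x.2 := by
  have hinj : Set.InjOn (fun j ↦ (j, m)) (s.erase m : Set ι) := fun _ _ _ _ h ↦ congrArg Prod.fst h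
  rw [← sum_image (f := fun x : ι × ι ↦ f x.1 x.2) hinj]
  refine sum_le_sum_of_subset_of_nonneg ?_ fun x _ _ ↦ hf x.1 x.2
  intro x hx
  obtain ⟨j, hj, rfl⟩ := mem_image.mp hx
  exact mem_offDiag.mpr ⟨mem_of_mem_erase hj, hm, ne_of_mem_erase hj⟩

theorem sum_offDiag_eq_sum_sum_ite {ι M : Type*} [DecidableEq ι] [AddCommMonoid M] (s : Finset ι)
    (f : ι → ι → M) :
    ∑ x ∈ s.offDiag, f x.1 x.2 = ∑ j ∈ s, ∑ k ∈ s, if j ≠ k then f j k else 0 := by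
  have hfilter : s.offDiag = {x ∈ s ×ˢ s | x.1 ≠ x.2} := by
    ext x
    simp [and_assoc]
  rw [hfilter, sum_filter, sum_product]

section PowerNonlinearity

variable {E : Type*} [SeminormedAddCommGroup E] [NormedSpace ℝ E] {p : ℝ}

/-- The power nonlinearity `F(x) = |x|^p x` of order `p + 1`, on a real (semi)normed space. -/
noncomputable def powerNonlinearity (p : ℝ) (x : E) : E := ‖x‖ ^ p • x

theorem norm_powerNonlinearity (p : ℝ) (x : E) : ‖powerNonlinearity p x‖ = ‖x‖ ^ p * ‖x‖ := by
  rw [powerNonlinearity, norm_smul, Real.norm_of_nonneg (by positivity)]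

theorem norm_powerNonlinearity_sub_le (hp : 0 ≤ p) {R : ℝ} {x y : E} (hx : ‖x‖ ≤ R)
    (hy : ‖y‖ ≤ R) :
    ‖powerNonlinearity p x - powerNonlinearity p y‖ ≤ (p + 1) * R ^ p * ‖x - y‖ := by
  wlog hyx : ‖y‖ ≤ ‖x‖ generalizing x y
  · rw [norm_sub_rev, norm_sub_rev x]
    exact this hy hx (le_of_not_ge hyx)
  have hpow : ‖y‖ ^ p ≤ ‖x‖ ^ p := by gcongr
  have hsplit : powerNonlinearity p x - powerNonlinearity p y
      = ‖x‖ ^ p • (x - y) + (‖x‖ ^ p - ‖y‖ ^ p) • y := by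
    simp only [powerNonlinearity]
    module
  calc ‖powerNonlinearity p x - powerNonlinearity p y‖
      ≤ ‖x‖ ^ p * ‖x - y‖ + (‖x‖ ^ p - ‖y‖ ^ p) * ‖y‖ := by
        rw [hsplit]
        refine (norm_add_le _ _).trans_eq ?_
        rw [norm_smul, norm_smul, Real.norm_of_nonneg (by positivity),
          Real.norm_of_nonneg (sub_nonneg.mpr hpow)]
    _ ≤ ‖x‖ ^ p * ‖x - y‖ + p * ‖x‖ ^ p * (‖x‖ - ‖y‖) := by
        gcongr _ + ?_
        exact rpow_sub_rpow_mul_le_s6 hp (norm_nonneg x) (norm_nonneg y)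
    _ ≤ ‖x‖ ^ p * ‖x - y‖ + p * ‖x‖ ^ p * ‖x - y‖ := by
        gcongr
        exact norm_sub_norm_le x y
    _ = (p + 1) * ‖x‖ ^ p * ‖x - y‖ := by ring
    _ ≤ (p + 1) * R ^ p * ‖x - y‖ := by gcongr

theorem norm_powerNonlinearity_sum_sub_le_of_forall_norm_le {ι : Type*} [DecidableEq ι]
    {s : Finset ι} {v : ι → E} {m : ι} (hp : 0 ≤ p) (hm : m ∈ s) (hmax : ∀ j ∈ s, ‖v j‖ ≤ ‖v m‖) :
    ‖powerNonlinearity p (∑ j ∈ s, v j) - ∑ j ∈ s, powerNonlinearity p (v j)‖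
      ≤ ((p + 1) * (#s : ℝ) ^ p + 1) * ∑ j ∈ s.erase m, ‖v j‖ * ‖v m‖ ^ p := by
  have hsum : ‖∑ j ∈ s, v j‖ ≤ #s * ‖v m‖ :=
    (norm_sum_le_of_le s hmax).trans_eq (by rw [sum_const, nsmul_eq_mul])
  have hcard : (1 : ℝ) ≤ #s := by exact_mod_cast card_pos.mpr ⟨m, hm⟩
  have hmain : ‖powerNonlinearity p (∑ j ∈ s, v j) - powerNonlinearity p (v m)‖
      ≤ (p + 1) * (#s : ℝ) ^ p * ∑ j ∈ s.erase m, ‖v j‖ * ‖v m‖ ^ p :=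
    calc ‖powerNonlinearity p (∑ j ∈ s, v j) - powerNonlinearity p (v m)‖
        ≤ (p + 1) * (#s * ‖v m‖) ^ p * ‖∑ j ∈ s, v j - v m‖ :=
          norm_powerNonlinearity_sub_le hp hsum (le_mul_of_one_le_left (norm_nonneg _) hcard)
      _ ≤ (p + 1) * (#s * ‖v m‖) ^ p * ∑ j ∈ s.erase m, ‖v j‖ := by
          rw [← sum_erase_eq_sub hm]
          gcongr
          exact norm_sum_le _ _
      _ = (p + 1) * (#s : ℝ) ^ p * ∑ j ∈ s.erase m, ‖v j‖ * ‖v m‖ ^ p := by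
          rw [Real.mul_rpow (by positivity) (norm_nonneg _), ← sum_mul]
          ring
  have hrest : ‖∑ j ∈ s.erase m, powerNonlinearity p (v j)‖
      ≤ ∑ j ∈ s.erase m, ‖v j‖ * ‖v m‖ ^ p := by
    refine norm_sum_le_of_le _ fun j hj ↦ ?_
    rw [norm_powerNonlinearity, mul_comm]
    gcongr
    exact hmax j (mem_of_mem_erase hj)
  rw [← add_sum_erase s (fun j ↦ powerNonlinearity p (v j)) hm, ← sub_sub, add_mul, one_mul]
  exact (norm_sub_le _ _).trans (add_le_add hmain hrest)

theorem nonlinear_profile_decoupling_general {ι : Type*} (hp : 0 ≤ p) (s : Finset ι)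
    (v : ι → E) :
    ‖powerNonlinearity p (∑ j ∈ s, v j) - ∑ j ∈ s, powerNonlinearity p (v j)‖
      ≤ ((p + 1) * (#s : ℝ) ^ p + 1) * ∑ x ∈ s.offDiag, ‖v x.1‖ * ‖v x.2‖ ^ p := by
  classical
  rcases s.eq_empty_or_nonempty with rfl | hs
  · simp [powerNonlinearity]
  obtain ⟨m, hm, hmax⟩ := s.exists_max_image (fun j ↦ ‖v j‖) hs
  refine (norm_powerNonlinearity_sum_sub_le_of_forall_norm_le hp hm hmax).trans ?_
  gcongr
  exact sum_erase_le_sum_offDiag (f := fun j k ↦ ‖v j‖ * ‖v k‖ ^ p) hm fun _ _ ↦ by positivity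

end PowerNonlinearity

/-- For `p > 0` and a positive integer `J`, with `F(z) = |z|^p z`, there is
`C = C(J,p) > 0` such that for all complex `v_1, …, v_J`,
`| F(Σ v_j) − Σ F(v_j) | ≤ C Σ_{j≠k} |v_j| |v_k|^p`. -/
theorem nonlinear_profile_decoupling (p : ℝ) (hp : 0 < p) (J : ℕ) (hJ : 0 < J) :
    ∃ C : ℝ, 0 < C ∧ ∀ v : Fin J → ℂ,
      ‖(↑(‖∑ j, v j‖ ^ p) : ℂ) * (∑ j, v j) - ∑ j, (↑(‖v j‖ ^ p) : ℂ) * v j‖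
        ≤ C * ∑ j, ∑ k, if j ≠ k then ‖v j‖ * ‖v k‖ ^ p else 0 := by
  refine ⟨(p + 1) * (J : ℝ) ^ p + 1, by positivity, fun v ↦ ?_⟩
  simpa only [powerNonlinearity, Complex.real_smul, card_fin,
    sum_offDiag_eq_sum_sum_ite univ fun j k ↦ ‖v j‖ * ‖v k‖ ^ p] using
    nonlinear_profile_decoupling_general hp.le univ v
end

section
/- Let p ≥ 1. There exists a constant C = C(p) > 0 such that for all complex numbers f and g one has | |f+g|^p (f+g) − |f|^p f − |g|^p g | ≤ C · |f| · |g| · ( |f|^{p−1} + |g|^{p−1} ). -/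
/-! Write `φ(u) = ‖u‖ ^ p`. Splitting `φ(f + g) (f + g)` along `f + g`, the cross term equals
`(φ(f + g) - φ(f)) f + (φ(f + g) - φ(g)) g`. Since `‖f + g‖` and `‖f‖` differ by at most `‖g‖`,
the increment `φ(f + g) - φ(f)` is `O(‖g‖ (‖f‖ ^ (p - 1) + ‖g‖ ^ (p - 1)))`: by the mean value
inequality if `1 ≤ p`, and by subadditivity of `t ↦ t ^ p` if `0 ≤ p ≤ 1`. The other increment is
symmetric. -/

section RealPowers

variable {p a b c : ℝ}

lemma abs_rpow_sub_rpow_le_mul_max_rpow (hp : 1 ≤ p) (ha : 0 ≤ a) (hb : 0 ≤ b) :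
    |a ^ p - b ^ p| ≤ p * max a b ^ (p - 1) * |a - b| := by
  refine (convex_Icc 0 (max a b)).norm_image_sub_le_of_norm_hasDerivWithin_le
    (fun x _ ↦ (Real.hasDerivAt_rpow_const (Or.inr hp)).hasDerivWithinAt) (fun x hx ↦ ?_)
    ⟨hb, le_max_right a b⟩ ⟨ha, le_max_left a b⟩
  have hx_pow : 0 ≤ x ^ (p - 1) := Real.rpow_nonneg hx.1 _
  rw [Real.norm_of_nonneg (by positivity)]
  gcongr
  exacts [hx.1, hx.2]

lemma abs_rpow_sub_rpow_le_abs_sub_rpow (hp₀ : 0 ≤ p) (hp₁ : p ≤ 1) (ha : 0 ≤ a) (hb : 0 ≤ b) :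
    |a ^ p - b ^ p| ≤ |a - b| ^ p := by
  wlog hba : b ≤ a generalizing a b
  · simpa only [abs_sub_comm] using this hb ha (le_of_not_ge hba)
  rw [abs_of_nonneg (sub_nonneg.2 (Real.rpow_le_rpow hb hba hp₀)), abs_of_nonneg (sub_nonneg.2 hba),
    sub_le_iff_le_add]
  simpa only [sub_add_cancel] using Real.rpow_add_le_add_rpow (sub_nonneg.2 hba) hb hp₀ hp₁

lemma add_rpow_le_two_rpow_mul_add_rpow (hp : 0 ≤ p) (ha : 0 ≤ a) (hb : 0 ≤ b) :
    (a + b) ^ p ≤ 2 ^ p * (a ^ p + b ^ p) := by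
  calc (a + b) ^ p ≤ (2 * max a b) ^ p := by
        rw [two_mul]
        gcongr
        exacts [le_max_left a b, le_max_right a b]
    _ = 2 ^ p * max (a ^ p) (b ^ p) := by
        rw [Real.mul_rpow zero_le_two (le_max_of_le_left ha), Real.rpow_max ha hb hp]
    _ ≤ 2 ^ p * (a ^ p + b ^ p) := by
        gcongr
        exact max_le_add_of_nonneg (Real.rpow_nonneg ha p) (Real.rpow_nonneg hb p)

lemma abs_rpow_sub_rpow_le_of_one_le (hp : 1 ≤ p) (ha : 0 ≤ a) (hb : 0 ≤ b) (hab : |a - b| ≤ c) :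
    |a ^ p - b ^ p| ≤ p * 2 ^ (p - 1) * c * (b ^ (p - 1) + c ^ (p - 1)) := by
  have hc : 0 ≤ c := (abs_nonneg _).trans hab
  have hp' : 0 ≤ p - 1 := sub_nonneg.2 hp
  have hmax : max a b ≤ b + c := max_le (by linarith [le_abs_self (a - b)]) (by linarith)
  calc |a ^ p - b ^ p| ≤ p * max a b ^ (p - 1) * |a - b| :=
        abs_rpow_sub_rpow_le_mul_max_rpow hp ha hb
    _ ≤ p * (b + c) ^ (p - 1) * c := by gcongr
    _ ≤ p * (2 ^ (p - 1) * (b ^ (p - 1) + c ^ (p - 1))) * c := by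
        gcongr
        exact add_rpow_le_two_rpow_mul_add_rpow hp' hb hc
    _ = p * 2 ^ (p - 1) * c * (b ^ (p - 1) + c ^ (p - 1)) := by ring

lemma abs_rpow_sub_rpow_le_of_le_one (hp₀ : 0 ≤ p) (hp₁ : p ≤ 1) (ha : 0 ≤ a) (hb : 0 ≤ b)
    (hab : |a - b| ≤ c) : |a ^ p - b ^ p| ≤ c * (b ^ (p - 1) + c ^ (p - 1)) := by
  rcases ((abs_nonneg _).trans hab).eq_or_lt with rfl | hc
  · obtain rfl : a = b := sub_eq_zero.1 (abs_nonpos_iff.1 hab)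
    simp only [sub_self, abs_zero, zero_mul, le_refl]
  calc |a ^ p - b ^ p| ≤ |a - b| ^ p := abs_rpow_sub_rpow_le_abs_sub_rpow hp₀ hp₁ ha hb
    _ ≤ c ^ p := by gcongr
    _ = c * c ^ (p - 1) := by rw [Real.rpow_sub_one hc.ne', mul_div_cancel₀ _ hc.ne']
    _ ≤ c * (b ^ (p - 1) + c ^ (p - 1)) := by
        gcongr
        exact le_add_of_nonneg_left (Real.rpow_nonneg hb _)

lemma exists_abs_rpow_sub_rpow_le (hp : 0 ≤ p) :
    ∃ C : ℝ, 0 < C ∧ ∀ a b c : ℝ, 0 ≤ a → 0 ≤ b → |a - b| ≤ c →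
      |a ^ p - b ^ p| ≤ C * c * (b ^ (p - 1) + c ^ (p - 1)) := by
  rcases le_total p 1 with hp₁ | hp₁
  · refine ⟨1, one_pos, fun a b c ha hb hab ↦ ?_⟩
    simpa only [one_mul] using abs_rpow_sub_rpow_le_of_le_one hp hp₁ ha hb hab
  · exact ⟨p * 2 ^ (p - 1), by positivity, fun a b c ↦ abs_rpow_sub_rpow_le_of_one_le hp₁⟩

end RealPowers

section NormedSpace

variable {E : Type*} [SeminormedAddCommGroup E] [NormedSpace ℝ E]

lemma norm_smul_add_sub_smul_sub_smul_le (φ : E → ℝ) (f g : E) :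
    ‖φ (f + g) • (f + g) - φ f • f - φ g • g‖
      ≤ |φ (f + g) - φ f| * ‖f‖ + |φ (f + g) - φ g| * ‖g‖ := by
  have hsplit : φ (f + g) • (f + g) - φ f • f - φ g • g
      = (φ (f + g) - φ f) • f + (φ (f + g) - φ g) • g := by module
  rw [hsplit]
  simpa only [norm_smul, Real.norm_eq_abs] using
    norm_add_le ((φ (f + g) - φ f) • f) ((φ (f + g) - φ g) • g)

theorem nonlinearity_cross_term_bound_general {p : ℝ} (hp : 0 ≤ p) :
    ∃ C : ℝ, 0 < C ∧ ∀ f g : E,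
      ‖‖f + g‖ ^ p • (f + g) - ‖f‖ ^ p • f - ‖g‖ ^ p • g‖
        ≤ C * ‖f‖ * ‖g‖ * (‖f‖ ^ (p - 1) + ‖g‖ ^ (p - 1)) := by
  obtain ⟨C, hC, hincr⟩ := exists_abs_rpow_sub_rpow_le hp
  refine ⟨2 * C, by positivity, fun f g ↦ ?_⟩
  have hf : |‖f + g‖ ^ p - ‖f‖ ^ p| ≤ C * ‖g‖ * (‖f‖ ^ (p - 1) + ‖g‖ ^ (p - 1)) :=
    hincr _ _ _ (norm_nonneg _) (norm_nonneg _)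
      (by simpa only [add_sub_cancel_left] using abs_norm_sub_norm_le (f + g) f)
  have hg : |‖f + g‖ ^ p - ‖g‖ ^ p| ≤ C * ‖f‖ * (‖g‖ ^ (p - 1) + ‖f‖ ^ (p - 1)) :=
    hincr _ _ _ (norm_nonneg _) (norm_nonneg _)
      (by simpa only [add_sub_cancel_right] using abs_norm_sub_norm_le (f + g) g)
  calc ‖‖f + g‖ ^ p • (f + g) - ‖f‖ ^ p • f - ‖g‖ ^ p • g‖
      ≤ |‖f + g‖ ^ p - ‖f‖ ^ p| * ‖f‖ + |‖f + g‖ ^ p - ‖g‖ ^ p| * ‖g‖ :=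
        norm_smul_add_sub_smul_sub_smul_le (fun u ↦ ‖u‖ ^ p) f g
    _ ≤ C * ‖g‖ * (‖f‖ ^ (p - 1) + ‖g‖ ^ (p - 1)) * ‖f‖
        + C * ‖f‖ * (‖g‖ ^ (p - 1) + ‖f‖ ^ (p - 1)) * ‖g‖ := by gcongr
    _ = 2 * C * ‖f‖ * ‖g‖ * (‖f‖ ^ (p - 1) + ‖g‖ ^ (p - 1)) := by ring

end NormedSpace

/-- For `p ≥ 1` there is `C = C(p) > 0` such that for all complex `f g`,
`| |f+g|^p(f+g) − |f|^p f − |g|^p g | ≤ C |f| |g| (|f|^{p−1} + |g|^{p−1})`. -/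
theorem nonlinearity_cross_term_bound (p : ℝ) (hp : 1 ≤ p) :
    ∃ C : ℝ, 0 < C ∧ ∀ f g : ℂ,
      ‖(↑(‖f + g‖ ^ p) : ℂ) * (f + g) - (↑(‖f‖ ^ p) : ℂ) * f - (↑(‖g‖ ^ p) : ℂ) * g‖
        ≤ C * ‖f‖ * ‖g‖ * (‖f‖ ^ (p - 1) + ‖g‖ ^ (p - 1)) := by
  simpa only [Complex.real_smul] using
    nonlinearity_cross_term_bound_general (E := ℂ) (zero_le_one.trans hp)
end
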